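/- (Foster's criterion) Let (X_n) be an irreducible Markov chain on a countable state space S, and suppose there is a function f : S → [0,∞) with finite sublevel sets {x : f(x) ≤ M} and a finite set F ⊆ S such that E[f(X_{n+1}) - f(X_n) | X_n = x] ≤ -ε < 0 for all x ∉ F (for some ε ≥ 0, with ε = 0 allowed provided the drift is strictly negative outside F and f(X_{n+1}) is integrable). Then the chain is recurrent. -/

import Mathlib

open MeasureTheory
open scoped Classical

/-- `nStepProb K n x y` is the `n`-step transition probability of a Markov chain with
one-step transition probabilities `K`. -/
noncomputable def nStepProb {S : Type*} (K : S → S → ℝ) : ℕ → S → S → ℝ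
  | 0, x, y => if x = y then 1 else 0
  | n + 1, x, y => ∑' z : S, K x z * nStepProb K n z y

namespace Foster

lemma summable_row {S : Type*} {K : S → S → ℝ} (hKrow : ∀ x, ∑' y : S, K x y = 1) (x : S) :
    Summable (K x) := by
  by_contra h
  have := hKrow x
  rw [tsum_eq_zero_of_not_summable h] at this
  norm_num at this

lemma summable_mul {S : Type*} {K : S → S → ℝ} (hK : ∀ x y, 0 ≤ K x y)
    (hKrow : ∀ x, ∑' y : S, K x y = 1) (x : S) {g : S → ℝ} (h0 : ∀ y, 0 ≤ g y)
    (h1 : ∀ y, g y ≤ 1) : Summable (fun y => K x y * g y) :=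
  Summable.of_nonneg_of_le (fun y => mul_nonneg (hK x y) (h0 y))
    (fun y => mul_le_of_le_one_right (hK x y) (h1 y)) (summable_row hKrow x)

lemma tsum_mul_le_one {S : Type*} {K : S → S → ℝ} (hK : ∀ x y, 0 ≤ K x y)
    (hKrow : ∀ x, ∑' y : S, K x y = 1) (x : S) {g : S → ℝ} (h0 : ∀ y, 0 ≤ g y)
    (h1 : ∀ y, g y ≤ 1) : ∑' y, K x y * g y ≤ 1 := by
  rw [← hKrow x]
  exact (summable_mul hK hKrow x h0 h1).tsum_le_tsum
    (fun y => mul_le_of_le_one_right (hK x y) (h1 y)) (summable_row hKrow x)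

lemma nStep_nonneg {S : Type*} {K : S → S → ℝ} (hK : ∀ x y, 0 ≤ K x y) (n : ℕ) :
    ∀ x y, 0 ≤ nStepProb K n x y := by
  induction n with
  | zero => intro x y; simp only [nStepProb]; split_ifs <;> norm_num
  | succ n ih => intro x y; exact tsum_nonneg fun z => mul_nonneg (hK x z) (ih z y)

lemma propagate {S : Type*} {K : S → S → ℝ} (hK : ∀ x y, 0 ≤ K x y) (x : S) (P : S → Prop)
    (hP : ∀ z, P z → z ≠ x → ∀ w, 0 < K z w → P w) (n : ℕ) :
    ∀ z, P z → 0 < nStepProb K n z x → P x := by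
  induction n with
  | zero =>
    intro z hz h
    simp only [nStepProb] at h
    split_ifs at h with hzx
    · exact hzx ▸ hz
    · exact absurd h (lt_irrefl _)
  | succ n ih =>
    intro z hz h
    by_cases hzx : z = x
    · exact hzx ▸ hz
    · simp only [nStepProb] at h
      have : ∃ w, K z w * nStepProb K n w x ≠ 0 := by
        by_contra! hc
        simp [hc] at h
      obtain ⟨w, hw⟩ := this
      have h1 : 0 < K z w := lt_of_le_of_ne (hK z w) (Ne.symm (left_ne_zero_of_mul hw))
      have h2 : 0 < nStepProb K n w x :=
        lt_of_le_of_ne (nStep_nonneg hK n w x) (Ne.symm (right_ne_zero_of_mul hw))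
      exact ih w (hP z hz hzx w h1) h2

/-- Local maximum principle. -/
lemma max_step {S : Type*} {K : S → S → ℝ} (hK : ∀ x y, 0 ≤ K x y)
    (hKrow : ∀ x, ∑' y : S, K x y = 1) (g : S → ℝ) (z : S)
    (hs : Summable (fun y => K z y * g y)) (hsub : g z ≤ ∑' y, K z y * g y)
    (hmax : ∀ y, g y ≤ g z) (w : S) (hw : 0 < K z w) : g w = g z := by
  by_contra hne
  have hlt : g w < g z := lt_of_le_of_ne (hmax w) hne
  have h1 : ∑' y, K z y * g y < ∑' y, K z y * g z :=
    Summable.tsum_lt_tsum (i := w) (fun y => mul_le_mul_of_nonneg_left (hmax y) (hK z y))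
      (mul_lt_mul_of_pos_left hlt hw) hs ((summable_row hKrow z).mul_right _)
  rw [tsum_mul_right, hKrow z, one_mul] at h1
  linarith

lemma harmonic_zero {S : Type*} {K : S → S → ℝ} (hK : ∀ x y, 0 ≤ K x y)
    (hKrow : ∀ x, ∑' y : S, K x y = 1)
    (hirr : ∀ x y : S, ∃ n : ℕ, 0 < nStepProb K n x y)
    (f : S → ℝ) (hf : ∀ x, 0 ≤ f x)
    (hsublevel : ∀ M : ℝ, {x : S | f x ≤ M}.Finite)
    (F : Set S) (hF : F.Finite)
    (hsummable : ∀ x : S, Summable (fun y : S => K x y * f y))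
    (hdrift : ∀ x : S, x ∉ F → ∑' y : S, K x y * f y ≤ f x)
    (x : S) (h : S → ℝ) (h0 : ∀ y, 0 ≤ h y) (h1 : ∀ y, h y ≤ 1) (hx : h x = 0)
    (hharm : ∀ z, z ≠ x → h z = ∑' y, K z y * h y) : ∀ z, h z = 0 := by
  have hsh := fun z => summable_mul hK hKrow z h0 h1
  obtain ⟨z0, hz0T, hz0⟩ := Set.exists_max_image (insert x F) h (hF.insert x) ⟨x, by simp⟩
  -- comparison for every positive ε
  have key : ∀ ε : ℝ, 0 < ε → ∀ z, h z - ε * f z ≤ h z0 := by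
    intro ε hε z
    set g : S → ℝ := fun y => h y - ε * f y with hg
    -- g attains its max
    have hfin : {y : S | f y ≤ f z + 1 / ε}.Finite := hsublevel _
    obtain ⟨m, -, hm⟩ := Set.exists_max_image _ g hfin
      ⟨z, by simp only [Set.mem_ofPred_eq]; have := one_div_pos.mpr hε; linarith⟩
    have hmz : g z ≤ g m := hm z (by
      simp only [Set.mem_ofPred_eq]; have := one_div_pos.mpr hε; linarith)
    have hmax : ∀ y, g y ≤ g m := by
      intro y
      by_cases hy : f y ≤ f z + 1 / ε
      · exact hm y hy
      · push Not at hy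
        refine le_trans ?_ hmz
        have h3 : ε * (f z + 1 / ε) ≤ ε * f y := mul_le_mul_of_nonneg_left hy.le hε.le
        have h4 : ε * (f z + 1 / ε) = ε * f z + 1 := by field_simp
        simp only [hg]
        have := h1 y
        have := h0 z
        linarith
    have hsg : ∀ y, Summable (fun w => K y w * g w) := by
      intro y
      have := (hsh y).sub ((hsummable y).mul_left ε)
      refine this.congr fun w => ?_
      simp only [hg]; ring
    have hex : ∃ t ∈ insert x F, g t = g m := by
      by_contra! hc
      obtain ⟨n, hn⟩ := hirr m x
      refine hc x (by simp) (propagate hK x (fun y => g y = g m) ?_ n m rfl hn)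
      intro y hy hyx w hw
      have hyT : y ∉ insert x F := fun hmem => hc y hmem hy
      have hyF : y ∉ F := fun hmem => hyT (Set.mem_insert_of_mem _ hmem)
      rw [← hy]
      refine max_step hK hKrow g y (hsg y) ?_ (fun v => by rw [hy]; exact hmax v) w hw
      have e : ∑' w, K y w * g w = ∑' w, K y w * h w - ε * ∑' w, K y w * f w := by
        rw [← tsum_mul_left, ← (hsh y).tsum_sub ((hsummable y).mul_left ε)]
        refine tsum_congr fun w => ?_
        simp only [hg]; ring
      rw [e, ← hharm y hyx]
      have := mul_le_mul_of_nonneg_left (hdrift y hyF) hε.le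
      simp only [hg]
      linarith
    obtain ⟨t, htT, ht⟩ := hex
    have h5 := hz0 t htT
    have h6 := mul_nonneg hε.le (hf t)
    have h7 := hmax z
    rw [← ht] at h7
    simp only [hg] at h7
    linarith
  have hglob : ∀ z, h z ≤ h z0 := by
    intro z
    refine le_of_forall_pos_le_add fun δ hδ => ?_
    have hp : 0 < f z + 1 := by have := hf z; linarith
    have h2 := key (δ / (f z + 1)) (div_pos hδ hp) z
    have h3 : δ / (f z + 1) * f z ≤ δ := by
      rw [div_mul_eq_mul_div, div_le_iff₀ hp]
      nlinarith
    linarith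
  obtain ⟨n, hn⟩ := hirr z0 x
  have hz0' : h x = h z0 := by
    refine propagate hK x (fun y => h y = h z0) ?_ n z0 rfl hn
    intro y hy hyx w hw
    rw [← hy]
    exact max_step hK hKrow h y (hsh y) (hharm y hyx).le (fun v => by rw [hy]; exact hglob v) w hw
  intro z
  have := hglob z
  have := h0 z
  linarith

/-- Probability of avoiding `x` at times `0, …, k`. -/
noncomputable def avoid {S : Type*} (K : S → S → ℝ) (x : S) : ℕ → S → ℝ
  | 0, z => if z = x then 0 else 1
  | k + 1, z => if z = x then 0 else ∑' w, K z w * avoid K x k w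

/-- Probability of avoiding `x` at times `N, …, N + k`. -/
noncomputable def avoidFrom {S : Type*} (K : S → S → ℝ) (x : S) (k : ℕ) : ℕ → S → ℝ
  | 0, z => avoid K x k z
  | N + 1, z => ∑' w, K z w * avoidFrom K x k N w

lemma avoid_bounds {S : Type*} {K : S → S → ℝ} (hK : ∀ x y, 0 ≤ K x y)
    (hKrow : ∀ x, ∑' y : S, K x y = 1) (x : S) (k : ℕ) :
    ∀ z, 0 ≤ avoid K x k z ∧ avoid K x k z ≤ 1 := by
  induction k with
  | zero => intro z; simp only [avoid]; split_ifs <;> norm_num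
  | succ k ih =>
    intro z
    simp only [avoid]
    split_ifs
    · norm_num
    · exact ⟨tsum_nonneg fun w => mul_nonneg (hK z w) (ih w).1,
        tsum_mul_le_one hK hKrow z (fun w => (ih w).1) (fun w => (ih w).2)⟩

lemma avoidFrom_bounds {S : Type*} {K : S → S → ℝ} (hK : ∀ x y, 0 ≤ K x y)
    (hKrow : ∀ x, ∑' y : S, K x y = 1) (x : S) (k N : ℕ) :
    ∀ z, 0 ≤ avoidFrom K x k N z ∧ avoidFrom K x k N z ≤ 1 := by
  induction N with
  | zero => exact avoid_bounds hK hKrow x k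
  | succ N ih =>
    intro z
    exact ⟨tsum_nonneg fun w => mul_nonneg (hK z w) (ih w).1,
        tsum_mul_le_one hK hKrow z (fun w => (ih w).1) (fun w => (ih w).2)⟩

lemma avoid_succ_le {S : Type*} {K : S → S → ℝ} (hK : ∀ x y, 0 ≤ K x y)
    (hKrow : ∀ x, ∑' y : S, K x y = 1) (x : S) (k : ℕ) :
    ∀ z, avoid K x (k + 1) z ≤ avoid K x k z := by
  induction k with
  | zero =>
    intro z
    have := (avoid_bounds hK hKrow x 1 z).2
    by_cases hz : z = x
    · simp [avoid, hz]
    · simpa [avoid, hz] using this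
  | succ k ih =>
    intro z
    have b := avoid_bounds hK hKrow x
    rw [avoid, avoid]
    split_ifs
    · exact le_rfl
    · exact (summable_mul hK hKrow z (fun w => (b _ w).1) (fun w => (b _ w).2)).tsum_le_tsum
        (fun w => mul_le_mul_of_nonneg_left (ih w) (hK z w))
        (summable_mul hK hKrow z (fun w => (b _ w).1) (fun w => (b _ w).2))

lemma tendsto_step {S : Type*} {K : S → S → ℝ} (hK : ∀ x y, 0 ≤ K x y)
    (hKrow : ∀ x, ∑' y : S, K x y = 1) (z : S) (u : ℕ → S → ℝ) (g : S → ℝ)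
    (hu : ∀ k w, 0 ≤ u k w ∧ u k w ≤ 1)
    (ht : ∀ w, Filter.Tendsto (fun k => u k w) Filter.atTop (nhds (g w))) :
    Filter.Tendsto (fun k => ∑' w, K z w * u k w) Filter.atTop (nhds (∑' w, K z w * g w)) := by
  refine tendsto_tsum_of_dominated_convergence (bound := K z) (summable_row hKrow z)
    (fun w => (ht w).const_mul _) (Filter.Eventually.of_forall fun k w => ?_)
  rw [Real.norm_of_nonneg (mul_nonneg (hK z w) (hu k w).1)]
  exact mul_le_of_le_one_right (hK z w) (hu k w).2

lemma avoid_tendsto {S : Type*} {K : S → S → ℝ} (hK : ∀ x y, 0 ≤ K x y)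
    (hKrow : ∀ x, ∑' y : S, K x y = 1)
    (hirr : ∀ x y : S, ∃ n : ℕ, 0 < nStepProb K n x y)
    (f : S → ℝ) (hf : ∀ x, 0 ≤ f x)
    (hsublevel : ∀ M : ℝ, {x : S | f x ≤ M}.Finite)
    (F : Set S) (hF : F.Finite)
    (hsummable : ∀ x : S, Summable (fun y : S => K x y * f y))
    (hdrift : ∀ x : S, x ∉ F → ∑' y : S, K x y * f y ≤ f x)
    (x z : S) : Filter.Tendsto (fun k => avoid K x k z) Filter.atTop (nhds 0) := by
  have b := avoid_bounds hK hKrow x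
  set h : S → ℝ := fun w => ⨅ k, avoid K x k w with hh
  have ht : ∀ w, Filter.Tendsto (fun k => avoid K x k w) Filter.atTop (nhds (h w)) := fun w =>
    tendsto_atTop_ciInf (antitone_nat_of_succ_le fun k => avoid_succ_le hK hKrow x k w)
      ⟨0, by rintro _ ⟨k, rfl⟩; exact (b k w).1⟩
  have hz : ∀ w, h w = 0 := by
    refine harmonic_zero hK hKrow hirr f hf hsublevel F hF hsummable hdrift x h
      (fun y => ge_of_tendsto' (ht y) fun k => (b k y).1)
      (fun y => le_of_tendsto' (ht y) fun k => (b k y).2) ?_ ?_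
    · refine tendsto_nhds_unique (ht x) ?_
      have : (fun k => avoid K x k x) = fun _ => 0 := by
        funext k; cases k <;> simp [avoid]
      rw [this]; exact tendsto_const_nhds
    · intro y hy
      have h1 := (ht y).comp (Filter.tendsto_add_atTop_nat 1)
      refine tendsto_nhds_unique h1 ?_
      have h2 := tendsto_step hK hKrow y (avoid K x) h b ht
      refine h2.congr fun k => ?_
      simp [avoid, hy]
  simpa [hz z] using ht z

lemma avoidFrom_tendsto {S : Type*} {K : S → S → ℝ} (hK : ∀ x y, 0 ≤ K x y)
    (hKrow : ∀ x, ∑' y : S, K x y = 1) (x : S)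
    (h : ∀ z, Filter.Tendsto (fun k => avoid K x k z) Filter.atTop (nhds 0)) (N : ℕ) :
    ∀ z, Filter.Tendsto (fun k => avoidFrom K x k N z) Filter.atTop (nhds 0) := by
  induction N with
  | zero => exact h
  | succ N ih =>
    intro z
    have := tendsto_step hK hKrow z (fun k => avoidFrom K x k N) (fun _ => 0)
      (fun k w => avoidFrom_bounds hK hKrow x k N w) ih
    simpa [avoidFrom] using this

section meas
variable {S : Type*} [Countable S] {Ω : Type*} [MeasurableSpace Ω] {μ : Measure Ω}
  {X : ℕ → Ω → S} {K : S → S → ℝ}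

lemma meas_step (hK : ∀ x y, 0 ≤ K x y) (hKrow : ∀ x, ∑' y : S, K x y = 1)
    (hMarkov : ∀ (n : ℕ) (path : ℕ → S) (y : S),
      μ {ω | (∀ i ≤ n, X i ω = path i) ∧ X (n + 1) ω = y} =
        μ {ω | ∀ i ≤ n, X i ω = path i} * ENNReal.ofReal (K (path n) y))
    (n : ℕ) (path : ℕ → S) (E : Set Ω) (g : S → ℝ) (hg : ∀ w, 0 ≤ g w ∧ g w ≤ 1)
    (h : ∀ p : ℕ → S, μ ({ω | ∀ i ≤ n + 1, X i ω = p i} ∩ E) ≤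
      μ {ω | ∀ i ≤ n + 1, X i ω = p i} * ENNReal.ofReal (g (p (n + 1)))) :
    μ ({ω | ∀ i ≤ n, X i ω = path i} ∩ E) ≤
      μ {ω | ∀ i ≤ n, X i ω = path i} * ENNReal.ofReal (∑' w, K (path n) w * g w) := by
  have hcyl : ∀ y, {ω | ∀ i ≤ n + 1, X i ω = Function.update path (n + 1) y i} =
      {ω | (∀ i ≤ n, X i ω = path i) ∧ X (n + 1) ω = y} := by
    intro y
    ext ω
    simp only [Set.mem_ofPred_eq]
    constructor
    · intro hω
      refine ⟨fun i hi => ?_, by simpa using hω (n + 1) le_rfl⟩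
      have := hω i (by omega)
      rwa [Function.update_of_ne (by omega)] at this
    · rintro ⟨h1, h2⟩ i hi
      by_cases hin : i = n + 1
      · subst hin; simpa using h2
      · rw [Function.update_of_ne hin]; exact h1 i (by omega)
  have hsub : {ω | ∀ i ≤ n, X i ω = path i} ∩ E ⊆
      ⋃ y : S, ({ω | ∀ i ≤ n + 1, X i ω = Function.update path (n + 1) y i} ∩ E) := by
    rintro ω ⟨h1, h2⟩
    refine Set.mem_iUnion.2 ⟨X (n + 1) ω, ?_, h2⟩
    rw [hcyl]
    exact ⟨h1, rfl⟩
  calc _ ≤ _ := measure_mono hsub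
    _ ≤ _ := measure_iUnion_le _
    _ ≤ ∑' y : S, μ {ω | ∀ i ≤ n, X i ω = path i} * ENNReal.ofReal (K (path n) y * g y) := by
      refine ENNReal.tsum_le_tsum fun y => ?_
      refine (h _).trans ?_
      rw [hcyl, hMarkov, Function.update_self, ENNReal.ofReal_mul (hK _ _), mul_assoc]
    _ = _ := by
      rw [ENNReal.tsum_mul_left, ENNReal.ofReal_tsum_of_nonneg
        (fun y => mul_nonneg (hK _ _) (hg y).1)
        (summable_mul hK hKrow _ (fun w => (hg w).1) (fun w => (hg w).2))]

lemma meas_avoid (hK : ∀ x y, 0 ≤ K x y) (hKrow : ∀ x, ∑' y : S, K x y = 1)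
    (hMarkov : ∀ (n : ℕ) (path : ℕ → S) (y : S),
      μ {ω | (∀ i ≤ n, X i ω = path i) ∧ X (n + 1) ω = y} =
        μ {ω | ∀ i ≤ n, X i ω = path i} * ENNReal.ofReal (K (path n) y)) (x : S) (k : ℕ) :
    ∀ (n : ℕ) (path : ℕ → S),
    μ ({ω | ∀ i ≤ n, X i ω = path i} ∩ {ω | ∀ j ≥ n, X j ω ≠ x}) ≤
      μ {ω | ∀ i ≤ n, X i ω = path i} * ENNReal.ofReal (avoid K x k (path n)) := by
  have hemp : ∀ (n : ℕ) (path : ℕ → S), path n = x →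
      {ω | ∀ i ≤ n, X i ω = path i} ∩ {ω | ∀ j ≥ n, X j ω ≠ x} = ∅ := by
    intro n path h
    ext ω
    simp only [Set.mem_inter_iff, Set.mem_ofPred_eq, Set.mem_empty_iff_false, iff_false]
    rintro ⟨h1, h2⟩
    exact h2 n le_rfl ((h1 n le_rfl).trans h)
  induction k with
  | zero =>
    intro n path
    by_cases hx : path n = x
    · rw [hemp n path hx]; simp
    · simpa [avoid, hx] using measure_mono Set.inter_subset_left
  | succ k ih =>
    intro n path
    by_cases hx : path n = x
    · rw [hemp n path hx]; simp
    · rw [avoid, if_neg hx]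
      refine meas_step hK hKrow hMarkov n path _ _ (avoid_bounds hK hKrow x k) fun p => ?_
      refine le_trans (measure_mono ?_) (ih (n + 1) p)
      exact Set.inter_subset_inter_right _ fun ω hω j hj => hω j (by omega)

lemma meas_avoidFrom (hK : ∀ x y, 0 ≤ K x y) (hKrow : ∀ x, ∑' y : S, K x y = 1)
    (hMarkov : ∀ (n : ℕ) (path : ℕ → S) (y : S),
      μ {ω | (∀ i ≤ n, X i ω = path i) ∧ X (n + 1) ω = y} =
        μ {ω | ∀ i ≤ n, X i ω = path i} * ENNReal.ofReal (K (path n) y)) (x : S) (k N : ℕ) :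
    ∀ (n : ℕ) (path : ℕ → S),
    μ ({ω | ∀ i ≤ n, X i ω = path i} ∩ {ω | ∀ j ≥ n + N, X j ω ≠ x}) ≤
      μ {ω | ∀ i ≤ n, X i ω = path i} * ENNReal.ofReal (avoidFrom K x k N (path n)) := by
  induction N with
  | zero => exact meas_avoid hK hKrow hMarkov x k
  | succ N ih =>
    intro n path
    rw [avoidFrom]
    refine meas_step hK hKrow hMarkov n path _ _ (avoidFrom_bounds hK hKrow x k N) fun p => ?_
    refine le_trans (measure_mono ?_) (ih (n + 1) p)
    exact Set.inter_subset_inter_right _ fun ω hω j hj => hω j (by omega)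

end meas

end Foster

/-- Foster's criterion: an irreducible Markov chain `(X_n)` on a countable state space
admitting a nonnegative Lyapunov function `f` with finite sublevel sets whose drift is
nonincreasing outside a finite set `F` is recurrent: almost surely every state is
visited infinitely often. -/
theorem fosters_criterion (S : Type*) [Countable S] [Nonempty S]
    (Ω : Type*) [MeasurableSpace Ω] (μ : Measure Ω) [IsProbabilityMeasure μ]
    (X : ℕ → Ω → S) (K : S → S → ℝ)
    (hKnonneg : ∀ x y, 0 ≤ K x y) (hKrow : ∀ x, ∑' y : S, K x y = 1)
    -- time-homogeneous Markov property over cylinder events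
    (hMarkov : ∀ (n : ℕ) (path : ℕ → S) (y : S),
      μ {ω | (∀ i ≤ n, X i ω = path i) ∧ X (n + 1) ω = y} =
        μ {ω | ∀ i ≤ n, X i ω = path i} * ENNReal.ofReal (K (path n) y))
    -- irreducibility
    (hirr : ∀ x y : S, ∃ n : ℕ, 0 < nStepProb K n x y)
    (f : S → ℝ) (hfnonneg : ∀ x, 0 ≤ f x)
    (hsublevel : ∀ M : ℝ, {x : S | f x ≤ M}.Finite)
    (F : Set S) (hF : F.Finite)
    (hsummable : ∀ x : S, Summable (fun y : S => K x y * f y))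
    (hdrift : ∀ x : S, x ∉ F → ∑' y : S, K x y * f y ≤ f x) :
    ∀ᵐ ω ∂μ, ∀ x : S, {n : ℕ | X n ω = x}.Infinite := by
  rw [ae_all_iff]
  intro x
  have hN : ∀ N : ℕ, ∀ᵐ ω ∂μ, ∃ j ≥ N, X j ω = x := by
    intro N
    rw [ae_iff]
    have hsub : {ω | ¬ ∃ j ≥ N, X j ω = x} ⊆
        ⋃ a : S, ({ω | ∀ i ≤ 0, X i ω = (fun _ => a) i} ∩ {ω | ∀ j ≥ 0 + N, X j ω ≠ x}) := by
      intro ω hω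
      refine Set.mem_iUnion.2 ⟨X 0 ω, ?_, ?_⟩
      · intro i hi
        obtain rfl : i = 0 := by omega
        rfl
      · intro j hj h
        exact hω ⟨j, by omega, h⟩
    refine measure_mono_null hsub (measure_iUnion_null fun a => ?_)
    have ht := Foster.avoidFrom_tendsto hKnonneg hKrow x
      (fun z => Foster.avoid_tendsto hKnonneg hKrow hirr f hfnonneg hsublevel F hF hsummable
        hdrift x z) N a
    have ht2 := ENNReal.tendsto_ofReal ht
    rw [ENNReal.ofReal_zero] at ht2
    refine le_antisymm (ge_of_tendsto' ht2 fun k => ?_) zero_le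
    refine (Foster.meas_avoidFrom hKnonneg hKrow hMarkov x k N 0 (fun _ => a)).trans ?_
    exact mul_le_of_le_one_left zero_le prob_le_one
  rw [← ae_all_iff] at hN
  filter_upwards [hN] with ω hω
  refine Set.infinite_of_forall_exists_gt fun n => ?_
  obtain ⟨j, hj, h⟩ := hω (n + 1)
  exact ⟨j, h, by omega⟩
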